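/- arXiv:2509.25737 — 4 statements merged into one kernel-verified Lean document; each statement's English description precedes it below -/
import Mathlib

section
/- Let R be a commutative ring, I an invertible R-module, and β : I × I → R a nondegenerate bilinear form. Then: (i) the R-linear map τ : I ⊗[R] I → R determined by τ(x ⊗ y) = β(x, y) is bijective; and (ii) for all x, x', y, y' ∈ I one has β(x, x') · β(y, y') = β(x, y) · β(x', y'). -/
open TensorProduct

section Invertible

variable {R M N P A : Type*} [CommSemiring R]
  [AddCommMonoid M] [Module R M] [AddCommMonoid N] [Module R N] [Module.Invertible R N]

theorem tensor_lift_bijective_iff_of_invertible (β : M →ₗ[R] N →ₗ[R] R) :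
    Function.Bijective (TensorProduct.lift β) ↔ Function.Bijective β := by
  refine ⟨fun hlift ↦ ?_, fun hβ ↦ ?_⟩
  · exact Module.Invertible.bijective_curry (LinearEquiv.ofBijective (TensorProduct.lift β) hlift)
  · have lift_eq_contractLeft_comp : TensorProduct.lift β =
        contractLeft R N ∘ₗ ((LinearEquiv.ofBijective β hβ).rTensor N).toLinearMap :=
      TensorProduct.ext' fun _ _ ↦ rfl
    rw [lift_eq_contractLeft_comp]
    exact Module.Invertible.bijective.comp (LinearEquiv.bijective _)

theorem bilinear_apply_comm_of_invertible [AddCommMonoid P] [Module R P]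
    (B : N →ₗ[R] N →ₗ[R] P) (x y : N) : B x y = B y x :=
  congrArg (TensorProduct.lift B) Module.Invertible.tmul_comm

theorem linear_apply_mul_apply_comm_of_invertible [NonUnitalNonAssocSemiring A] [Module R A]
    [SMulCommClass R A A] [IsScalarTower R A A] (f g : N →ₗ[R] A) (x y : N) :
    f x * g y = f y * g x :=
  bilinear_apply_comm_of_invertible ((LinearMap.mul R A).compl₁₂ f g) x y

theorem tensor_lift_bijective_and_mul_symm_of_nondegenerate_general (β : N →ₗ[R] N →ₗ[R] R) :
    (Function.Bijective (TensorProduct.lift β) ↔ Function.Bijective β) ∧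
      ∀ x x' y y' : N, β x x' * β y y' = β x y * β x' y' :=
  ⟨tensor_lift_bijective_iff_of_invertible β, fun x x' y y' ↦
    linear_apply_mul_apply_comm_of_invertible (β x) (β.flip y') x' y⟩

end Invertible

/-- Let `R` be a commutative ring, `I` an invertible `R`-module (witnessed by
`J` and an isomorphism `I ⊗[R] J ≅ R`), and `β : I × I → R` a nondegenerate bilinear form,
i.e. an `R`-bilinear map whose adjoint `x ↦ β x` from `I` to `Hom_R(I, R)` is bijective.  Then:
(i) the `R`-linear map `τ : I ⊗[R] I → R` determined by `τ(x ⊗ y) = β(x, y)` is bijective; and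
(ii) `β(x, x')·β(y, y') = β(x, y)·β(x', y')` for all `x, x', y, y' ∈ I`. -/
theorem tensor_lift_bijective_and_mul_symm_of_nondegenerate
    {R : Type*} [CommRing R] {I : Type*} [AddCommGroup I] [Module R I]
    {J : Type*} [AddCommGroup J] [Module R J] (e : (I ⊗[R] J) ≃ₗ[R] R)
    (β : I →ₗ[R] I →ₗ[R] R) (hβ : Function.Bijective β) :
    Function.Bijective (TensorProduct.lift β) ∧
      ∀ x x' y y' : I, β x x' * β y y' = β x y * β x' y' := by
  have : Module.Invertible R I := .left e
  exact (tensor_lift_bijective_and_mul_symm_of_nondegenerate_general β).imp_left (·.mpr hβ)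
end

section
/- Let R be a commutative ring and I an invertible R-module. Then there exists an R-module isomorphism I ⊗[R] I ≅ R if and only if I admits a nondegenerate bilinear form β : I × I → R (such a form is then automatically symmetric). -/
open TensorProduct

/-!
The map `M ⊗ N → R` induced by a pairing `β : M → N → R` is `β ⊗ N : M ⊗ N → Nᵛ ⊗ N` followed by
evaluation. For invertible `N`, evaluation is an isomorphism and tensoring with `N` reflects
isomorphisms, so pairings with bijective adjoint `M → Nᵛ` correspond to isomorphisms `M ⊗ N ≃ R`.
Symmetry is automatic when `M = N` because the swap of `M ⊗ M` is locally the swap of `R ⊗ R`, which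
is the identity.
-/

section InvertibleModule

variable {R M N P : Type*} [CommSemiring R] [AddCommMonoid M] [AddCommMonoid N] [AddCommMonoid P]
  [Module R M] [Module R N] [Module R P]

theorem lift_eq_contractLeft_comp_rTensor (β : M →ₗ[R] N →ₗ[R] R) :
    TensorProduct.lift β = contractLeft R N ∘ₗ β.rTensor N :=
  TensorProduct.ext' fun _ _ ↦ rfl

theorem lift_bijective_iff [Module.Invertible R N] {β : M →ₗ[R] N →ₗ[R] R} :
    Function.Bijective (TensorProduct.lift β) ↔ Function.Bijective β := by
  rw [lift_eq_contractLeft_comp_rTensor, LinearMap.coe_comp,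
    Module.Invertible.bijective.of_comp_iff', Module.Invertible.rTensor_bijective_iff]

theorem nonempty_tensorProduct_linearEquiv_iff_exists_bijective [Module.Invertible R N] :
    Nonempty (M ⊗[R] N ≃ₗ[R] R) ↔ ∃ β : M →ₗ[R] N →ₗ[R] R, Function.Bijective β := by
  constructor
  · rintro ⟨f⟩
    exact ⟨TensorProduct.curry f, Module.Invertible.bijective_curry f⟩
  · rintro ⟨β, hβ⟩
    exact ⟨.ofBijective (TensorProduct.lift β) (lift_bijective_iff.mpr hβ)⟩

theorem bilin_apply_comm_of_invertible [Module.Invertible R M] (β : M →ₗ[R] M →ₗ[R] P) (x y : M) :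
    β x y = β y x :=
  congrArg (TensorProduct.lift β) Module.Invertible.tmul_comm

theorem square_trivial_iff_exists_nondegenerate_form_general [Module.Invertible R M] :
    Nonempty (M ⊗[R] M ≃ₗ[R] R) ↔
      ∃ β : M →ₗ[R] M →ₗ[R] R, Function.Bijective β ∧ ∀ x y : M, β x y = β y x := by
  rw [nonempty_tensorProduct_linearEquiv_iff_exists_bijective]
  exact exists_congr fun β ↦ (and_iff_left (bilin_apply_comm_of_invertible β)).symm

end InvertibleModule

/-- Let `R` be a commutative ring and `I` an invertible `R`-module (witnessed
by `J` and an isomorphism `I ⊗[R] J ≅ R`).  Then there exists an `R`-module isomorphism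
`I ⊗[R] I ≅ R` if and only if `I` admits a nondegenerate bilinear form `β : I × I → R`
(i.e. an `R`-bilinear form whose adjoint `x ↦ β x : I → Hom_R(I, R)` is bijective); such a
form is then automatically symmetric. -/
theorem square_trivial_iff_exists_nondegenerate_form
    {R : Type*} [CommRing R] {I : Type*} [AddCommGroup I] [Module R I]
    {J : Type*} [AddCommGroup J] [Module R J] (e : (I ⊗[R] J) ≃ₗ[R] R) :
    Nonempty ((I ⊗[R] I) ≃ₗ[R] R) ↔
      ∃ β : I →ₗ[R] I →ₗ[R] R,
        Function.Bijective β ∧ ∀ x y : I, β x y = β y x := by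
  have : Module.Invertible R I := .left e
  exact square_trivial_iff_exists_nondegenerate_form_general
end

section
/- Let (R, λ) be a commutative ring with involution, let K be the total ring of fractions of R (the localization of R at the multiplicative set of nonzerodivisors, with injective algebra map ι : R → K), and let λ_K : K → K be a ring automorphism satisfying λ_K ∘ ι = ι ∘ λ. Let I ⊆ K be an R-submodule such that I · λ_K(I) = ι(R)·1, i.e. the product of the submodule I with its image under λ_K equals the unit R-submodule of K. Then: (i) for all i, j ∈ I the element i·λ_K(j) lies in the image of ι, so there is a well-defined map β : I × I → R with ι(β(i, j)) = i·λ_K(j); (ii) β is a λ-sesquilinear λ-hermitian form on I; (iii) β is nondegenerate. -/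
/-- A `λ`-sesquilinear form on an `R`-module `M`, for a commutative ring `R` with involution
`lam`. -/
structure IsSesqForm {R : Type*} [CommRing R] (lam : R →+* R)
    {M : Type*} [AddCommGroup M] [Module R M] (β : M → M → R) : Prop where
  add_left : ∀ x x' y : M, β (x + x') y = β x y + β x' y
  add_right : ∀ x y y' : M, β x (y + y') = β x y + β x y'
  smul_left : ∀ (r : R) (x y : M), β (r • x) y = r * β x y
  smul_right : ∀ (r : R) (x y : M), β x (r • y) = lam r * β x y

/-- A form `β` is `λ`-hermitian if `β(x, y) = lam (β(y, x))`. -/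
def IsHermitian {R : Type*} [CommRing R] (lam : R →+* R)
    {M : Type*} (β : M → M → R) : Prop :=
  ∀ x y : M, β x y = lam (β y x)

/-- A form `β` is nondegenerate if its adjoint `x ↦ β(x, ·)` is a bijection from `M` onto the
`λ`-semilinear maps `M → R`. -/
def IsNondegen {R : Type*} [CommRing R] (lam : R →+* R)
    {M : Type*} [AddCommGroup M] [Module R M] (β : M → M → R) : Prop :=
  (∀ x x' : M, (∀ y : M, β x y = β x' y) → x = x') ∧
  ∀ f : M → R, (∀ y y' : M, f (y + y') = f y + f y') →
    (∀ (r : R) (y : M), f (r • y) = lam r * f y) →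
    ∃ x : M, ∀ y : M, β x y = f y

/-!
Since `λ` is an involution and `K` is a localization of `R`, `λ_K` is an involution too.
Write `1 = ∑ₖ aₖ λ_K(cₖ)` with `aₖ, cₖ ∈ I`. Applying `λ_K` and multiplying by `y ∈ I` gives the
expansion `y = ∑ₖ β(y, aₖ) cₖ`, so that `(cₖ)` and `(β(·, aₖ))` form a dual basis of `I`. Hence an
element is determined by its pairings, and a semilinear map `f` is represented by
`x = ∑ₖ f(cₖ) aₖ`, because `f(y) = ∑ₖ λ(β(y, aₖ)) f(cₖ) = ∑ₖ β(aₖ, y) f(cₖ)`.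
-/

section Form

variable {R : Type*} [CommRing R] {lam : R →+* R} {M : Type*} [AddCommGroup M] [Module R M]
  {β : M → M → R} {ι : Type*} [Fintype ι]

theorem IsSesqForm.sum_smul_left (hβ : IsSesqForm lam β) (r : ι → R) (x : ι → M) (y : M) :
    β (∑ k, r k • x k) y = ∑ k, r k * β (x k) y := by
  let pairing : M →ₗ[R] R :=
    { toFun := (β · y)
      map_add' := (hβ.add_left · · y)
      map_smul' := (hβ.smul_left · · y) }
  change pairing (∑ k, r k • x k) = ∑ k, r k * pairing (x k)
  simp only [map_sum, map_smul, smul_eq_mul]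

theorem map_sum_smul_of_semilinear {f : M → R} (f_add : ∀ y y', f (y + y') = f y + f y')
    (f_smul : ∀ (r : R) (y : M), f (r • y) = lam r * f y) (r : ι → R) (y : ι → M) :
    f (∑ k, r k • y k) = ∑ k, lam (r k) * f (y k) := by
  let F : M →ₛₗ[lam] R := { toFun := f, map_add' := f_add, map_smul' := f_smul }
  change F (∑ k, r k • y k) = ∑ k, lam (r k) * F (y k)
  simp only [map_sum, map_smulₛₗ, smul_eq_mul]

theorem IsSesqForm.isNondegen_of_dualBasis (hβ : IsSesqForm lam β) (hherm : IsHermitian lam β)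
    (a c : ι → M) (expansion : ∀ y, ∑ k, β y (a k) • c k = y) : IsNondegen lam β := by
  refine ⟨fun x x' hxx' => ?_, fun f f_add f_smul => ⟨∑ k, f (c k) • a k, fun y => ?_⟩⟩
  · rw [← expansion x, ← expansion x']
    simp only [hxx']
  · calc β (∑ k, f (c k) • a k) y
        = ∑ k, f (c k) * β (a k) y := hβ.sum_smul_left _ _ _
      _ = ∑ k, lam (β y (a k)) * f (c k) :=
          Finset.sum_congr rfl fun k _ => by rw [hherm (a k) y, mul_comm]
      _ = f (∑ k, β y (a k) • c k) := (map_sum_smul_of_semilinear f_add f_smul _ _).symm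
      _ = f y := by rw [expansion]

end Form

section Algebra

variable {R : Type*} [CommRing R] {K : Type*} [CommRing K] [Algebra R K]

theorem exists_sum_mul_eq_of_mem_mul_span_image {α : Type*} {g : α → K} {N : Submodule R K}
    {s : Set α} {z : K} (hz : z ∈ N * Submodule.span R (g '' s)) :
    ∃ (n : ℕ) (a : Fin n → N) (c : Fin n → s), ∑ k, (a k : K) * g (c k) = z := by
  rw [← Submodule.span_eq N, Submodule.span_mul_span, Submodule.mem_span_set'] at hz
  obtain ⟨n, r, p, rfl⟩ := hz
  choose a ha b hb hab using fun k => Set.mem_mul.mp (p k).2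
  choose c hc hcb using hb
  refine ⟨n, fun k => r k • ⟨a k, ha k⟩, fun k => ⟨c k, hc k⟩, Finset.sum_congr rfl fun k _ => ?_⟩
  rw [Submodule.coe_smul, smul_mul_assoc, hcb, hab]

theorem involutive_of_isLocalization (S : Submonoid R) [IsLocalization S K] {lam : R →+* R}
    (hlam : Function.Involutive lam) {lamK : K →+* K}
    (hcomp : ∀ r, lamK (algebraMap R K r) = algebraMap R K (lam r)) :
    Function.Involutive lamK := by
  have comp_self : lamK.comp lamK = RingHom.id K :=
    IsLocalization.ringHom_ext S <| RingHom.ext fun r => by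
      simp only [RingHom.comp_apply, RingHom.id_apply, hcomp, hlam r]
  exact RingHom.congr_fun comp_self

variable {lam : R →+* R} {lamK : K →+* K} {I : Submodule R K}

theorem exists_algebraMap_eq_mul_of_mul_span_image_le_one
    (hI : I * Submodule.span R (lamK '' I) ≤ 1) (i j : I) :
    ∃ r : R, algebraMap R K r = i * lamK j :=
  Submodule.mem_one.mp <|
    hI (Submodule.mul_mem_mul i.2 (Submodule.subset_span (Set.mem_image_of_mem lamK j.2)))

variable {β : I → I → R}

theorem isSesqForm_of_algebraMap_eq_mul (hinj : Function.Injective (algebraMap R K))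
    (hcomp : ∀ r, lamK (algebraMap R K r) = algebraMap R K (lam r))
    (hβ : ∀ i j : I, algebraMap R K (β i j) = i * lamK j) : IsSesqForm lam β where
  add_left x x' y := hinj <| by
    simp only [map_add, hβ, Submodule.coe_add, add_mul]
  add_right x y y' := hinj <| by
    simp only [map_add, hβ, Submodule.coe_add, mul_add]
  smul_left r x y := hinj <| by
    simp only [map_mul, hβ, Submodule.coe_smul, Algebra.smul_def, mul_assoc]
  smul_right r x y := hinj <| by
    simp only [map_mul, hβ, Submodule.coe_smul, Algebra.smul_def, hcomp, mul_left_comm]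

theorem isHermitian_of_algebraMap_eq_mul (hinj : Function.Injective (algebraMap R K))
    (hlamK : Function.Involutive lamK)
    (hcomp : ∀ r, lamK (algebraMap R K r) = algebraMap R K (lam r))
    (hβ : ∀ i j : I, algebraMap R K (β i j) = i * lamK j) : IsHermitian lam β :=
  fun x y => hinj <| by rw [← hcomp, hβ, hβ, map_mul, hlamK, mul_comm]

theorem sum_smul_eq_self_of_sum_mul_eq_one {ι : Type*} [Fintype ι]
    (hlamK : Function.Involutive lamK)
    (hβ : ∀ i j : I, algebraMap R K (β i j) = i * lamK j) {a c : ι → I}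
    (hac : ∑ k, (a k : K) * lamK (c k) = 1) (y : I) : ∑ k, β y (a k) • c k = y := by
  have hac' : ∑ k, lamK (a k) * (c k : K) = 1 := by
    simpa only [map_sum, map_mul, hlamK _, map_one] using congrArg lamK hac
  ext
  calc ((∑ k, β y (a k) • c k : I) : K)
      = ∑ k, y * (lamK (a k) * c k) := by
        simp only [Submodule.coe_sum, Submodule.coe_smul, Algebra.smul_def, hβ, mul_assoc]
    _ = y := by rw [← Finset.mul_sum, hac', mul_one]

end Algebra

theorem fractional_ideal_hermitian_form_general
    {R : Type*} [CommRing R] {lam : R →+* R} {K : Type*} [CommRing K] [Algebra R K]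
    (hinj : Function.Injective (algebraMap R K))
    {lamK : K →+* K} (hlamK : Function.Involutive lamK)
    (hcomp : ∀ r : R, lamK (algebraMap R K r) = algebraMap R K (lam r))
    {I : Submodule R K} (hI : I * Submodule.span R (lamK '' (I : Set K)) = 1) :
    (∀ i j : I, ∃ r : R, algebraMap R K r = (i : K) * lamK (j : K)) ∧
    ∃ β : I → I → R,
      (∀ i j : I, algebraMap R K (β i j) = (i : K) * lamK (j : K)) ∧
      IsSesqForm lam β ∧ IsHermitian lam β ∧ IsNondegen lam β := by
  choose β hβ using exists_algebraMap_eq_mul_of_mul_span_image_le_one hI.le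
  have one_mem : (1 : K) ∈ I * Submodule.span R (lamK '' I) := Submodule.one_le.mp hI.ge
  obtain ⟨n, a, c, hac⟩ := exists_sum_mul_eq_of_mem_mul_span_image one_mem
  have hsesq : IsSesqForm lam β := isSesqForm_of_algebraMap_eq_mul hinj hcomp hβ
  have hherm : IsHermitian lam β := isHermitian_of_algebraMap_eq_mul hinj hlamK hcomp hβ
  exact ⟨fun i j => ⟨β i j, hβ i j⟩, β, hβ, hsesq, hherm,
    hsesq.isNondegen_of_dualBasis hherm a c (sum_smul_eq_self_of_sum_mul_eq_one hlamK hβ hac)⟩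

/-- Let `(R, λ)` be a commutative ring with involution, `K` the total ring of
fractions of `R` (the localization at the nonzerodivisors, with injective algebra map
`ι : R → K`), and `λ_K : K → K` a ring automorphism with `λ_K ∘ ι = ι ∘ λ`.  Let `I ⊆ K` be an
`R`-submodule with `I · λ_K(I) = 1` (the unit `R`-submodule of `K`).  Then: (i) for all
`i, j ∈ I` the element `i·λ_K(j)` lies in the image of `ι`, so there is a well-defined
`β : I × I → R` with `ι(β(i, j)) = i·λ_K(j)`; (ii) `β` is a `λ`-sesquilinear `λ`-hermitian
form on `I`; (iii) `β` is nondegenerate. -/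
theorem fractional_ideal_hermitian_form
    {R : Type*} [CommRing R] (lam : R →+* R) (hlam : ∀ r : R, lam (lam r) = r)
    (K : Type*) [CommRing K] [Algebra R K] [IsLocalization (nonZeroDivisors R) K]
    (hinj : Function.Injective (algebraMap R K))
    (lamK : K ≃+* K) (hcomp : ∀ r : R, lamK (algebraMap R K r) = algebraMap R K (lam r))
    (I : Submodule R K)
    (hI : I * Submodule.span R (lamK '' (I : Set K)) = 1) :
    (∀ i j : I, ∃ r : R, algebraMap R K r = (i : K) * lamK (j : K)) ∧
    ∃ β : I → I → R,
      (∀ i j : I, algebraMap R K (β i j) = (i : K) * lamK (j : K)) ∧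
      IsSesqForm lam β ∧ IsHermitian lam β ∧ IsNondegen lam β := by
  have hlamK : Function.Involutive (lamK : K →+* K) :=
    involutive_of_isLocalization (nonZeroDivisors R) hlam hcomp
  exact fractional_ideal_hermitian_form_general hinj hlamK hcomp hI
end

section
/- Let X and Z be schemes equipped with involutions λ_X : X ≅ X and λ_Z : Z ≅ Z (isomorphisms of schemes whose squares are the identity). Assume that every C₂-orbit of X lies in an affine open, i.e. for every point x of X there is an affine open subscheme U ⊆ X containing both x and λ_X(x), and assume the same for Z. Let X × Z denote the product of X and Z in the category of schemes (the fiber product over Spec ℤ), equipped with the product involution λ_X × λ_Z. Then every C₂-orbit of X × Z lies in an affine open: for every point p of X × Z there is an affine open subscheme W ⊆ X × Z containing both p and (λ_X × λ_Z)(p). -/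
open AlgebraicGeometry CategoryTheory CategoryTheory.Limits

/-!
If `S` has affine diagonal, as `Spec ℤ` does, every morphism from an affine scheme to `S` is affine.
For affine opens `U ⊆ X` and `V ⊆ Y`, the box `U ×ₛ V ⊆ X ×ₛ Y` is then affine, being the preimage
of `V` under a base change of `U ⟶ S`. A box contains a point together with its image under a
product endomorphism as soon as each side does so for the projections of that point.
-/

universe u

lemma isAffineHom_of_comp_of_diagonal {X Y Z : Scheme.{u}} (f : X ⟶ Y) (g : Y ⟶ Z)
    [IsAffineHom (f ≫ g)] [IsAffineHom (pullback.diagonal g)] : IsAffineHom f := by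
  let graph : X ⟶ pullback (f ≫ g) g := pullback.lift (𝟙 X) f (by simp)
  have : IsAffineHom graph :=
    MorphismProperty.of_isPullback (pullback_lift_diagonal_isPullback f g) ‹_›
  have : IsAffineHom (pullback.snd (f ≫ g) g) :=
    MorphismProperty.of_isPullback (.of_hasPullback (f ≫ g) g) ‹_›
  have graph_snd : graph ≫ pullback.snd (f ≫ g) g = f := pullback.lift_snd _ _ _
  exact graph_snd ▸ inferInstance

section

variable {X Y S P : Scheme.{u}} {fst : P ⟶ X} {snd : P ⟶ Y} {f : X ⟶ S} {g : Y ⟶ S}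

lemma isAffineOpen_preimage_inf_preimage_of_isPullback (h : IsPullback fst snd f g)
    {U : X.Opens} {V : Y.Opens} [IsAffineHom (U.ι ≫ f)] (hV : IsAffineOpen V) :
    IsAffineOpen (fst ⁻¹ᵁ U ⊓ snd ⁻¹ᵁ V) := by
  have strip : IsPullback (fst ∣_ U) ((fst ⁻¹ᵁ U).ι ≫ snd) (U.ι ≫ f) g :=
    (isPullback_morphismRestrict fst U).paste_vert h
  have : IsAffineHom ((fst ⁻¹ᵁ U).ι ≫ snd) :=
    MorphismProperty.of_isPullback strip ‹_›
  have box_eq : (fst ⁻¹ᵁ U).ι ''ᵁ (((fst ⁻¹ᵁ U).ι ≫ snd) ⁻¹ᵁ V) = fst ⁻¹ᵁ U ⊓ snd ⁻¹ᵁ V := by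
    rw [Scheme.Hom.comp_preimage, Scheme.Hom.image_preimage_eq_opensRange_inf,
      Scheme.Opens.opensRange_ι]
  exact box_eq ▸ (hV.preimage _).image_of_isOpenImmersion (fst ⁻¹ᵁ U).ι

theorem product_orbits_in_affine_opens_general
    [IsAffineHom (pullback.diagonal (terminal.from S))] (h : IsPullback fst snd f g)
    {a : X ⟶ X} {b : Y ⟶ Y} {c : P ⟶ P} (hca : c ≫ fst = fst ≫ a) (hcb : c ≫ snd = snd ≫ b)
    (hX : ∀ x : X, ∃ U : X.Opens, IsAffineOpen U ∧ x ∈ U ∧ a x ∈ U)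
    (hY : ∀ y : Y, ∃ V : Y.Opens, IsAffineOpen V ∧ y ∈ V ∧ b y ∈ V) (p : P) :
    ∃ W : P.Opens, IsAffineOpen W ∧ p ∈ W ∧ c p ∈ W := by
  obtain ⟨U, hU, hpU, hapU⟩ := hX (fst p)
  obtain ⟨V, hV, hpV, hbpV⟩ := hY (snd p)
  have : IsAffine U := hU
  have : IsAffineHom (U.ι ≫ f) :=
    isAffineHom_of_comp_of_diagonal _ (terminal.from S)
  have hcpU : fst (c p) ∈ U := by
    rwa [← Scheme.Hom.comp_apply, hca, Scheme.Hom.comp_apply]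
  have hcpV : snd (c p) ∈ V := by
    rwa [← Scheme.Hom.comp_apply, hcb, Scheme.Hom.comp_apply]
  exact ⟨fst ⁻¹ᵁ U ⊓ snd ⁻¹ᵁ V, isAffineOpen_preimage_inf_preimage_of_isPullback h hV,
    ⟨hpU, hpV⟩, hcpU, hcpV⟩

end

/-- Let `X` and `Z` be schemes with involutions `λ_X`, `λ_Z` (isomorphisms of
schemes squaring to the identity).  If every `C₂`-orbit of `X` lies in an affine open (for
every point `x` there is an affine open containing `x` and `λ_X(x)`), and similarly for `Z`,
then every `C₂`-orbit of the product `X ⨯ Z` (with the product involution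
`λ_X × λ_Z = prod.map λ_X.hom λ_Z.hom`) lies in an affine open. -/
theorem product_orbits_in_affine_opens
    (X Z : Scheme) (lX : X ≅ X) (lZ : Z ≅ Z)
    (hlX : lX.hom ≫ lX.hom = 𝟙 X) (hlZ : lZ.hom ≫ lZ.hom = 𝟙 Z)
    (hX : ∀ x : X, ∃ U : X.Opens, IsAffineOpen U ∧ x ∈ U ∧ lX.hom.base x ∈ U)
    (hZ : ∀ z : Z, ∃ V : Z.Opens, IsAffineOpen V ∧ z ∈ V ∧ lZ.hom.base z ∈ V) :
    ∀ p : ↑(X ⨯ Z), ∃ W : (X ⨯ Z).Opens,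
      IsAffineOpen W ∧ p ∈ W ∧ (prod.map lX.hom lZ.hom).base p ∈ W :=
  product_orbits_in_affine_opens_general (.of_hasBinaryProduct' X Z)
    (prod.map_fst _ _) (prod.map_snd _ _) hX hZ
end
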